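/- Soundness of rule R12 (Theorem 1, second part): Let H be a partial mixed graph and M a completion of H. Suppose A and B are adjacent in H and the mark at A on the edge A–B is a circle. Let S_A = {A} ∪ {V : V is adjacent to A in H and the edge V–A has an arrowhead at A}. Suppose there is an unbridged path ⟨K_1, …, K_m⟩ relative to S_A lying in H[−S_A], and for every vertex K_i (1 ≤ i ≤ m) there exists an uncovered possible directed path ⟨A, B, …, K_i⟩ in H whose second vertex is B, with B ≠ K_i. Then in M the edge between A and B has an arrowhead at A (in particular, A → B does not hold in M). -/

import Mathlib

/-- Marks at edge ends in a partial mixed graph. -/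
inductive Mark : Type
  | tail
  | arrow
  | circle
deriving DecidableEq

/-- A partial mixed graph (PMG): a symmetric irreflexive adjacency relation together
with, for each ordered pair `(a, b)` of adjacent vertices, a mark `mark a b` at `b` on
the edge `a–b`, such that no edge has tails at both endpoints. -/
structure PMG (V : Type) where
  adj : V → V → Prop
  symm : ∀ a b, adj a b → adj b a
  irrefl : ∀ a, ¬ adj a a
  mark : V → V → Mark
  noDoubleTail : ∀ a b, adj a b → ¬ (mark a b = Mark.tail ∧ mark b a = Mark.tail)

namespace PMG

variable {V : Type}

/-- `a → b`: adjacent, tail at `a`, arrowhead at `b`. -/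
def dir (G : PMG V) (a b : V) : Prop :=
  G.adj a b ∧ G.mark b a = Mark.tail ∧ G.mark a b = Mark.arrow

/-- `a ↔ b`: adjacent, arrowheads at both endpoints. -/
def bidir (G : PMG V) (a b : V) : Prop :=
  G.adj a b ∧ G.mark b a = Mark.arrow ∧ G.mark a b = Mark.arrow

/-- `a` is an ancestor of `b`: `a = b` or there is a directed path from `a` to `b`. -/
def Anc (G : PMG V) (a b : V) : Prop :=
  Relation.ReflTransGen G.dir a b

/-- `a` is an ancestor of some vertex of the set `S`. -/
def AncSet (G : PMG V) (a : V) (S : Set V) : Prop :=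
  ∃ v ∈ S, G.Anc a v

/-- A mixed graph: a PMG with no circle marks. -/
def IsMixed (G : PMG V) : Prop :=
  ∀ a b, G.adj a b → G.mark a b ≠ Mark.circle

/-- Ancestral: no directed cycles and no almost directed cycles. -/
def Ancestral (G : PMG V) : Prop :=
  ∀ a b, G.Anc a b → a ≠ b → ¬ G.dir b a ∧ ¬ G.bidir a b

/-- Unshielded collider `(a, b, c)`: `a, c` both adjacent to `b`, `a` and `c`
distinct and nonadjacent, arrowheads at `b` on both edges. -/
def UnshieldedCollider (G : PMG V) (a b c : V) : Prop :=
  a ≠ c ∧ G.adj a b ∧ G.adj c b ∧ ¬ G.adj a c ∧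
    G.mark a b = Mark.arrow ∧ G.mark c b = Mark.arrow

/-- `M` is a completion of the PMG `H`: same vertices and adjacencies, all non-circle
marks of `H` occur identically in `M`, `M` is an ancestral mixed graph, and every
unshielded collider of `M` is already an unshielded collider of `H`. -/
def Completion (H M : PMG V) : Prop :=
  (∀ a b, M.adj a b ↔ H.adj a b) ∧
  (∀ a b, H.adj a b → H.mark a b ≠ Mark.circle → M.mark a b = H.mark a b) ∧
  M.IsMixed ∧ M.Ancestral ∧
  (∀ a b c, M.UnshieldedCollider a b c → H.UnshieldedCollider a b c)

/-- An edge usable in a possible directed path from `a` to `b`: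
adjacent, no arrowhead at `a`, no tail at `b`. -/
def possEdge (G : PMG V) (a b : V) : Prop :=
  G.adj a b ∧ G.mark b a ≠ Mark.arrow ∧ G.mark a b ≠ Mark.tail

/-- A circle edge: adjacent with circle marks at both endpoints. -/
def circleEdge (G : PMG V) (a b : V) : Prop :=
  G.adj a b ∧ G.mark a b = Mark.circle ∧ G.mark b a = Mark.circle

/-- `p 0, …, p n` is a path: distinct vertices, consecutive ones adjacent. -/
def IsPathOn (G : PMG V) (p : ℕ → V) (n : ℕ) : Prop :=
  (∀ i ≤ n, ∀ j ≤ n, p i = p j → i = j) ∧ ∀ i < n, G.adj (p i) (p (i+1))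

/-- `p 0, …, p n` is a possible directed path. -/
def IsPossDirPathOn (G : PMG V) (p : ℕ → V) (n : ℕ) : Prop :=
  (∀ i ≤ n, ∀ j ≤ n, p i = p j → i = j) ∧ ∀ i < n, G.possEdge (p i) (p (i+1))

/-- `p 0, …, p n` is a circle path. -/
def IsCirclePathOn (G : PMG V) (p : ℕ → V) (n : ℕ) : Prop :=
  (∀ i ≤ n, ∀ j ≤ n, p i = p j → i = j) ∧ ∀ i < n, G.circleEdge (p i) (p (i+1))

/-- The path `p 0, …, p n` is uncovered: any two nonconsecutive neighbours of an
internal vertex are nonadjacent. -/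
def UncoveredOn (G : PMG V) (p : ℕ → V) (n : ℕ) : Prop :=
  ∀ i, i + 2 ≤ n → ¬ G.adj (p i) (p (i+2))

/-- `F_x` relative to `V'`: the vertices of `V'` adjacent to `x` whose edge carries
a circle or an arrowhead at `x`. -/
def Fset (G : PMG V) (V' : Set V) (x : V) : Set V :=
  {v | v ∈ V' ∧ G.adj v x ∧ (G.mark v x = Mark.circle ∨ G.mark v x = Mark.arrow)}

/-- `p 0, …, p n` is an unbridged path relative to `V'` in `G`: an uncovered circle
path with at least one edge, lying in `G[−V']`, with
`F_{p 0} \ F_{p 1} ≠ ∅` and `F_{p n} \ F_{p (n-1)} ≠ ∅`. -/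
def UnbridgedOn (G : PMG V) (V' : Set V) (p : ℕ → V) (n : ℕ) : Prop :=
  1 ≤ n ∧ G.IsCirclePathOn p n ∧ G.UncoveredOn p n ∧
  (∀ i ≤ n, p i ∉ V') ∧
  (G.Fset V' (p 0) \ G.Fset V' (p 1)).Nonempty ∧
  (G.Fset V' (p n) \ G.Fset V' (p (n-1))).Nonempty

/-- The set `S_A`: `A` together with all vertices adjacent to `A` whose edge has an
arrowhead at `A`. -/
def SA (G : PMG V) (A : V) : Set V :=
  {A} ∪ {v | G.adj v A ∧ G.mark v A = Mark.arrow}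

end PMG

theorem PMG.tail_dir {V : Type} {H M : PMG V} (h : PMG.Completion H M) {b c : V}
    (hbc : H.adj b c) (hm : M.mark c b ≠ Mark.arrow) : M.dir b c := by
  obtain ⟨h1, h2, h3, h4, h5⟩ := h
  have a1 := (h1 _ _).2 hbc
  have a2 := M.symm _ _ a1
  have n1 := h3 _ _ a1
  have n2 := h3 _ _ a2
  have n3 := M.noDoubleTail _ _ a1
  have t : M.mark c b = Mark.tail := by
    cases hx : M.mark c b <;> simp_all
  refine ⟨a1, t, ?_⟩
  cases hx : M.mark b c <;> simp_all

theorem PMG.step {V : Type} {H M : PMG V} (h : PMG.Completion H M) {a b c : V}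
    (hab : H.adj a b) (hbc : H.adj b c) (hne : a ≠ c) (hn : ¬ H.adj a c)
    (hm : M.mark a b = Mark.arrow) (hc : H.mark c b ≠ Mark.arrow) : M.dir b c := by
  apply PMG.tail_dir h hbc
  intro hx
  obtain ⟨h1, h2, h3, h4, h5⟩ := h
  have := h5 a b c ⟨hne, (h1 _ _).2 hab, (h1 _ _).2 (H.symm _ _ hbc),
    fun z => hn ((h1 _ _).1 z), hm, hx⟩
  exact hc this.2.2.2.2.2

theorem PMG.chain {V : Type} {H M : PMG V} (h : PMG.Completion H M) (p : ℕ → V) (n : ℕ)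
    (hinj : ∀ i ≤ n, ∀ j ≤ n, p i = p j → i = j)
    (hadj : ∀ i < n, H.adj (p i) (p (i+1)) ∧ H.mark (p (i+1)) (p i) ≠ Mark.arrow)
    (hunc : H.UncoveredOn p n) (h0 : M.dir (p 0) (p 1)) :
    ∀ i < n, M.dir (p i) (p (i+1)) := by
  intro i
  induction i with
  | zero => intro _; exact h0
  | succ k ih =>
    intro hk
    have d := ih (by omega)
    refine PMG.step h (hadj k (by omega)).1 (hadj (k+1) hk).1 ?_ (hunc k (by omega)) d.2.2
      (hadj (k+1) hk).2
    intro e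
    have := hinj k (by omega) (k+1+1) (by omega) e
    omega

theorem PMG.chain_anc {V : Type} {M : PMG V} (p : ℕ → V) (n : ℕ)
    (h : ∀ i < n, M.dir (p i) (p (i+1))) : ∀ i ≤ n, M.Anc (p 0) (p i) := by
  intro i
  induction i with
  | zero => intro _; exact Relation.ReflTransGen.refl
  | succ k ih => intro hk; exact (ih (by omega)).tail (h k (by omega))

/-- no edge `k → X` with `X ∈ S_A` for descendants `k` of `A`. -/
theorem PMG.no_into {V : Type} {H M : PMG V} (h : PMG.Completion H M) {A k X : V}
    (hk : M.Anc A k) (hkA : A ≠ k) (hX : X ∈ H.SA A) : ¬ M.dir k X := by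
  intro d
  have hAX : M.Anc A X := Relation.ReflTransGen.tail hk d
  rcases hX with hX | ⟨ha, hmk⟩
  · have : X = A := hX
    subst this
    exact (h.2.2.2.1 _ _ hk hkA).1 d
  · have hne : A ≠ X := by
      rintro rfl; exact H.irrefl _ ha
    have hm : M.mark X A = Mark.arrow := by
      rw [h.2.1 X A ha (by simp [hmk]), hmk]
    have aM := (h.1 _ _).2 ha
    have hanc := h.2.2.2.1 _ _ hAX hne
    have nc := h.2.2.1 _ _ (M.symm _ _ aM)
    cases hx : M.mark A X with
    | tail => exact hanc.1 ⟨aM, hx, hm⟩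
    | arrow => exact hanc.2 ⟨M.symm _ _ aM, hm, hx⟩
    | circle => exact nc hx

theorem PMG.end_dir {V : Type} {H M : PMG V} (h : PMG.Completion H M) {A k l : V}
    (hk : M.Anc A k) (hkA : A ≠ k) (hl : M.Anc A l) (hlA : A ≠ l) (hlS : l ∉ H.SA A)
    (hc : H.circleEdge k l) (hF : (H.Fset (H.SA A) k \ H.Fset (H.SA A) l).Nonempty) :
    M.dir k l := by
  obtain ⟨X, ⟨hXS, hXk, hXm⟩, hXl⟩ := hF
  have harr : M.mark X k = Mark.arrow := by
    by_contra hx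
    exact PMG.no_into h hk hkA hXS (PMG.tail_dir h (H.symm _ _ hXk) hx)
  have hnadj : ¬ H.adj X l := by
    intro ha
    apply hXl
    refine ⟨hXS, ha, ?_⟩
    cases hx : H.mark X l with
    | circle => exact Or.inl rfl
    | arrow => exact Or.inr rfl
    | tail =>
      exfalso
      refine PMG.no_into h hl hlA hXS (PMG.tail_dir h (H.symm _ _ ha) ?_)
      rw [h.2.1 X l ha (by simp [hx]), hx]
      simp
  refine PMG.step h hXk hc.1 ?_ hnadj harr (by simp [hc.2.2])
  rintro rfl
  exact hlS hXS

/-- **Soundness of rule R12.** If `A ∘–* B` in the PMG `H`, there is an unbridged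
path `⟨K_1, …, K_m⟩` relative to `S_A` lying in `H[−S_A]`, and for every vertex
`K_i` of that path there is an uncovered possible directed path `⟨A, B, …, K_i⟩`
in `H` whose second vertex is `B` (with `B ≠ K_i`), then every completion `M` of
`H` has an arrowhead at `A` on the edge `A–B` (in particular `A → B` does not hold
in `M`). -/
theorem R12_sound {V : Type} (H M : PMG V) (hHM : PMG.Completion H M)
    (A B : V) (hadj : H.adj A B) (hcirc : H.mark B A = Mark.circle)
    (q : ℕ → V) (m : ℕ) (hub : H.UnbridgedOn (H.SA A) q m)
    (hpaths : ∀ i ≤ m, ∃ (p : ℕ → V) (n : ℕ), 1 ≤ n ∧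
      H.IsPossDirPathOn p n ∧ H.UncoveredOn p n ∧
      p 0 = A ∧ p 1 = B ∧ p n = q i ∧ B ≠ q i) :
    M.mark B A = Mark.arrow ∧ ¬ M.dir A B := by
  have key : ¬ M.dir A B := by
    intro hd
    have hanc : ∀ i ≤ m, M.Anc A (q i) := by
      intro i hi
      obtain ⟨p, n, hn, hp, hu, h0, h1, hpn, _⟩ := hpaths i hi
      have := PMG.chain hHM p n hp.1 (fun i hi => ⟨(hp.2 i hi).1, (hp.2 i hi).2.1⟩) hu
        (by rw [h0, h1]; exact hd)
      have := PMG.chain_anc p n this n le_rfl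
      rwa [h0, hpn] at this
    obtain ⟨hm, hcp, hu, hS, hF0, hFm⟩ := hub
    have hneA : ∀ i ≤ m, A ≠ q i := fun i hi e => hS i hi (Or.inl e.symm)
    have d0 : M.dir (q 0) (q 1) :=
      PMG.end_dir hHM (hanc 0 (by omega)) (hneA 0 (by omega)) (hanc 1 hm) (hneA 1 hm)
        (hS 1 hm) (hcp.2 0 (by omega)) hF0
    have hch := PMG.chain hHM q m hcp.1
      (fun i hi => ⟨(hcp.2 i hi).1, by simp [(hcp.2 i hi).2.2]⟩) hu d0
    obtain ⟨k, rfl⟩ : ∃ k, m = k + 1 := ⟨m - 1, by omega⟩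
    have hce := hcp.2 k (by omega)
    have d1 : M.dir (q (k+1)) (q k) :=
      PMG.end_dir hHM (hanc _ le_rfl) (hneA _ le_rfl) (hanc k (by omega)) (hneA k (by omega))
        (hS k (by omega)) ⟨H.symm _ _ hce.1, hce.2.2, hce.2.1⟩ hFm
    have d2 := hch k (by omega)
    have := d1.2.1.symm.trans d2.2.2
    simp at this
  refine ⟨?_, key⟩
  by_contra hx
  exact key (PMG.tail_dir hHM hadj hx)
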